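/- Let u : ℝⁿ → ℝ be smooth with compact support, g : ℝⁿ → ℝ smooth, and define r = u Δ²g + 2 ∇(Δg)·∇u + 2 Δg Δu + 2 Δ(∇g·∇u) + 2 ∇g·∇(Δu). Then ∫ r g u = ∫ [ (Δg)² u² + 4 (∇g·∇u)² − 2 |∇g|² u Δu + 4 u Δg (∇g·∇u) ] = ∫ (u Δg + 2 ∇g·∇u)² − 2 ∫ |∇g|² u Δu, where the integrals are over ℝⁿ. -/

import Mathlib

/-!
Since `Δ(gu) = gΔu + 2∇g·∇u + uΔg`, applying `Δ` once more shows that `r = Δ²(gu) - gΔ²u`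
(`lap_lap_mul`). The Laplacian is symmetric against compactly supported functions
(`integral_lap_mul_comm`), hence `∫ r g u = ∫ (Δ(gu))² - ∫ Δu Δ(g²u)`. Expanding `Δ(g·gu)` by the
product rule, the terms containing `g` undifferentiated cancel pointwise and what remains is
`(uΔg + 2∇g·∇u)² - 2|∇g|² u Δu`.
-/

open MeasureTheory Real
open scoped RealInnerProductSpace

/-- The Laplacian `Δf = div (∇f)` of `f : ℝⁿ → ℝ`, as the sum of second partial derivatives. -/
noncomputable def lap {n : ℕ} (f : EuclideanSpace ℝ (Fin n) → ℝ) (x : EuclideanSpace ℝ (Fin n)) : ℝ :=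
  ∑ i : Fin n, fderiv ℝ (fun y => fderiv ℝ f y (EuclideanSpace.single i 1)) x
    (EuclideanSpace.single i 1)

/-- The bi-Laplacian `Δ²f = Δ (Δ f)`. -/
noncomputable def bilap {n : ℕ} (f : EuclideanSpace ℝ (Fin n) → ℝ) :
    EuclideanSpace ℝ (Fin n) → ℝ :=
  lap (lap f)

section Helpers

variable {n : ℕ} {f h k : EuclideanSpace ℝ (Fin n) → ℝ}

theorem contDiff_partial (hf : ContDiff ℝ (⊤ : ℕ∞) f) (v : EuclideanSpace ℝ (Fin n)) :
    ContDiff ℝ (⊤ : ℕ∞) (fun y => fderiv ℝ f y v) :=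
  (hf.fderiv_right (m := (⊤ : ℕ∞)) (by simp)).clm_apply contDiff_const

theorem contDiff_lap (hf : ContDiff ℝ (⊤ : ℕ∞) f) : ContDiff ℝ (⊤ : ℕ∞) (lap f) := by
  unfold lap
  exact ContDiff.sum fun i _ => contDiff_partial (contDiff_partial hf _) _

theorem differentiable_of_smooth (hf : ContDiff ℝ (⊤ : ℕ∞) f) : Differentiable ℝ f :=
  hf.differentiable (by simp)

theorem inner_gradient (f h : EuclideanSpace ℝ (Fin n) → ℝ) (x : EuclideanSpace ℝ (Fin n)) :
    ⟪gradient f x, gradient h x⟫ = ∑ i : Fin n,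
      fderiv ℝ f x (EuclideanSpace.single i 1) * fderiv ℝ h x (EuclideanSpace.single i 1) := by
  have key : ∀ (f : EuclideanSpace ℝ (Fin n) → ℝ) (i : Fin n),
      gradient f x i = fderiv ℝ f x (EuclideanSpace.single i 1) := by
    intro f i
    rw [← inner_gradient_left, EuclideanSpace.inner_single_right]
    simp
  rw [PiLp.inner_apply]
  refine Finset.sum_congr rfl fun i _ => ?_
  rw [key, key]
  simp [mul_comm]

theorem contDiff_inner_gradient (hf : ContDiff ℝ (⊤ : ℕ∞) f) (hh : ContDiff ℝ (⊤ : ℕ∞) h) :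
    ContDiff ℝ (⊤ : ℕ∞) (fun x => ⟪gradient f x, gradient h x⟫) := by
  simp only [inner_gradient]
  exact ContDiff.sum fun i _ => (contDiff_partial hf _).mul (contDiff_partial hh _)

theorem fderiv_mul_apply' (hf : ContDiff ℝ (⊤ : ℕ∞) f) (hh : ContDiff ℝ (⊤ : ℕ∞) h)
    (x v : EuclideanSpace ℝ (Fin n)) :
    fderiv ℝ (fun y => f y * h y) x v = f x * fderiv ℝ h x v + h x * fderiv ℝ f x v := by
  rw [fderiv_fun_mul (differentiable_of_smooth hf x) (differentiable_of_smooth hh x)]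
  simp

theorem lap_add (hf : ContDiff ℝ (⊤ : ℕ∞) f) (hh : ContDiff ℝ (⊤ : ℕ∞) h)
    (x : EuclideanSpace ℝ (Fin n)) :
    lap (fun y => f y + h y) x = lap f x + lap h x := by
  simp only [lap, ← Finset.sum_add_distrib]
  refine Finset.sum_congr rfl fun i _ => ?_
  have e : (fun y => fderiv ℝ (fun y => f y + h y) y (EuclideanSpace.single i 1)) =
      fun y => fderiv ℝ f y (EuclideanSpace.single i 1)
        + fderiv ℝ h y (EuclideanSpace.single i 1) := by
    funext y
    rw [fderiv_fun_add (differentiable_of_smooth hf y) (differentiable_of_smooth hh y)]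
    simp
  rw [e, fderiv_fun_add (differentiable_of_smooth (contDiff_partial hf _) x)
    (differentiable_of_smooth (contDiff_partial hh _) x)]
  simp

theorem lap_mul (hf : ContDiff ℝ (⊤ : ℕ∞) f) (hh : ContDiff ℝ (⊤ : ℕ∞) h)
    (x : EuclideanSpace ℝ (Fin n)) :
    lap (fun y => f y * h y) x =
      f x * lap h x + 2 * ⟪gradient f x, gradient h x⟫ + h x * lap f x := by
  simp only [lap, inner_gradient, Finset.mul_sum, ← Finset.sum_add_distrib]
  refine Finset.sum_congr rfl fun i _ => ?_
  have e : (fun y => fderiv ℝ (fun y => f y * h y) y (EuclideanSpace.single i 1)) =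
      fun y => f y * fderiv ℝ h y (EuclideanSpace.single i 1)
        + h y * fderiv ℝ f y (EuclideanSpace.single i 1) := by
    funext y
    exact fderiv_mul_apply' hf hh y _
  have hf' := contDiff_partial hf (EuclideanSpace.single i 1)
  have hh' := contDiff_partial hh (EuclideanSpace.single i 1)
  rw [e, fderiv_fun_add (differentiable_of_smooth (hf.mul hh') x)
    (differentiable_of_smooth (hh.mul hf') x), add_apply,
    fderiv_mul_apply' hf hh', fderiv_mul_apply' hh hf']
  ring

theorem inner_gradient_mul_right (hf : ContDiff ℝ (⊤ : ℕ∞) f) (hh : ContDiff ℝ (⊤ : ℕ∞) h)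
    (x : EuclideanSpace ℝ (Fin n)) :
    ⟪gradient k x, gradient (fun y => f y * h y) x⟫ =
      f x * ⟪gradient k x, gradient h x⟫ + h x * ⟪gradient k x, gradient f x⟫ := by
  simp only [inner_gradient, Finset.mul_sum, ← Finset.sum_add_distrib]
  refine Finset.sum_congr rfl fun i _ => ?_
  rw [fderiv_mul_apply' hf hh]
  ring

/-- The commutator formula `Δ²(fh) - fΔ²h`, which identifies `r` in the main identity. -/
theorem lap_lap_mul (hf : ContDiff ℝ (⊤ : ℕ∞) f) (hh : ContDiff ℝ (⊤ : ℕ∞) h)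
    (x : EuclideanSpace ℝ (Fin n)) :
    lap (lap (fun y => f y * h y)) x - f x * lap (lap h) x =
      h x * lap (lap f) x + 2 * ⟪gradient (lap f) x, gradient h x⟫
        + 2 * lap f x * lap h x
        + 2 * lap (fun y => ⟪gradient f y, gradient h y⟫) x
        + 2 * ⟪gradient f x, gradient (lap h) x⟫ := by
  have e : lap (fun y => f y * h y) = fun y => (f y * lap h y +
      (⟪gradient f y, gradient h y⟫ + ⟪gradient f y, gradient h y⟫)) + h y * lap f y := by
    funext y
    rw [lap_mul hf hh]
    ring
  have hP := contDiff_inner_gradient hf hh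
  have h1 := hf.mul (contDiff_lap hh)
  have h2 := hh.mul (contDiff_lap hf)
  rw [e, lap_add (h1.add (hP.add hP)) h2, lap_add h1 (hP.add hP), lap_add hP hP,
    lap_mul hf (contDiff_lap hh), lap_mul hh (contDiff_lap hf),
    real_inner_comm (gradient (lap f) x)]
  ring

theorem hasCompactSupport_lap (hc : HasCompactSupport f) : HasCompactSupport (lap f) := by
  refine HasCompactSupport.intro hc fun x hx => Finset.sum_eq_zero fun i _ => ?_
  refine image_eq_zero_of_notMem_tsupport
    (f := fun y => fderiv ℝ (fun y => fderiv ℝ f y (EuclideanSpace.single i 1)) y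
      (EuclideanSpace.single i 1)) fun hmem => hx ?_
  exact tsupport_fderiv_apply_subset ℝ _ (tsupport_fderiv_apply_subset ℝ _ hmem)

/-- Integration by parts in one direction; only one factor needs compact support. -/
theorem integral_mul_partial (hf : ContDiff ℝ (⊤ : ℕ∞) f) (hh : ContDiff ℝ (⊤ : ℕ∞) h)
    (hc : HasCompactSupport f) (v : EuclideanSpace ℝ (Fin n)) :
    ∫ x, f x * fderiv ℝ h x v = - ∫ x, fderiv ℝ f x v * h x := by
  apply integral_mul_fderiv_eq_neg_fderiv_mul_of_integrable
  · exact ((contDiff_partial hf v).continuous.mul hh.continuous).integrable_of_hasCompactSupport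
      ((hc.fderiv_apply ℝ v).mul_right)
  · exact (hf.continuous.mul (contDiff_partial hh v).continuous).integrable_of_hasCompactSupport
      hc.mul_right
  · exact (hf.continuous.mul hh.continuous).integrable_of_hasCompactSupport hc.mul_right
  · exact fun x _ => differentiable_of_smooth hf x
  · exact fun x _ => differentiable_of_smooth hh x

/-- Symmetry of the Laplacian when one of the two functions has compact support. -/
theorem integral_lap_mul_comm (hf : ContDiff ℝ (⊤ : ℕ∞) f) (hh : ContDiff ℝ (⊤ : ℕ∞) h)
    (hc : HasCompactSupport f) :
    ∫ x, lap h x * f x = ∫ x, h x * lap f x := by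
  simp only [lap, Finset.mul_sum, Finset.sum_mul]
  rw [integral_finsetSum, integral_finsetSum]
  · refine Finset.sum_congr rfl fun i _ => ?_
    have hf' := contDiff_partial hf (EuclideanSpace.single i 1)
    have hh' := contDiff_partial hh (EuclideanSpace.single i 1)
    have hc' : HasCompactSupport fun y => fderiv ℝ f y (EuclideanSpace.single i 1) :=
      hc.fderiv_apply ℝ _
    have a := integral_mul_partial hf hh' hc (EuclideanSpace.single i 1)
    have b := integral_mul_partial hf' hh hc' (EuclideanSpace.single i 1)
    simp only [mul_comm (h _), mul_comm _ (f _)]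
    rw [a, b, neg_neg]
  · intro i _
    have hf' := contDiff_partial hf (EuclideanSpace.single i 1)
    have hc' : HasCompactSupport fun y => fderiv ℝ f y (EuclideanSpace.single i 1) :=
      hc.fderiv_apply ℝ _
    exact (hh.continuous.mul (contDiff_partial hf' _).continuous).integrable_of_hasCompactSupport
      ((hc'.fderiv_apply ℝ _).mul_left)
  · intro i _
    have hh' := contDiff_partial hh (EuclideanSpace.single i 1)
    exact ((contDiff_partial hh' _).continuous.mul hf.continuous).integrable_of_hasCompactSupport
      hc.mul_left

end Helpers

/-- Identity (3.8) of the paper: evaluation of `ω = ∫ r g u`. -/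
theorem integral_r_g_u_identity
    {n : ℕ} (hn : 1 ≤ n) (u g : EuclideanSpace ℝ (Fin n) → ℝ)
    (hu : ContDiff ℝ (⊤ : ℕ∞) u) (husupp : HasCompactSupport u)
    (hg : ContDiff ℝ (⊤ : ℕ∞) g)
    (r : EuclideanSpace ℝ (Fin n) → ℝ)
    (hr : r = fun x =>
      u x * bilap g x + 2 * ⟪gradient (lap g) x, gradient u x⟫
        + 2 * lap g x * lap u x
        + 2 * lap (fun y => ⟪gradient g y, gradient u y⟫) x
        + 2 * ⟪gradient g x, gradient (lap u) x⟫) :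
    (∫ x, r x * g x * u x =
      ∫ x, ((lap g x) ^ 2 * (u x) ^ 2 + 4 * ⟪gradient g x, gradient u x⟫ ^ 2
        - 2 * ‖gradient g x‖ ^ 2 * u x * lap u x
        + 4 * u x * lap g x * ⟪gradient g x, gradient u x⟫)) ∧
    (∫ x, r x * g x * u x =
      (∫ x, (u x * lap g x + 2 * ⟪gradient g x, gradient u x⟫) ^ 2)
        - 2 * ∫ x, ‖gradient g x‖ ^ 2 * u x * lap u x) := by
  have hgu := hg.mul hu
  have hggu := hg.mul hgu
  have hcgu : HasCompactSupport fun x => g x * u x := husupp.mul_left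
  have hcggu : HasCompactSupport fun x => g x * (g x * u x) := hcgu.mul_left
  have hLu := contDiff_lap hu
  have hLg := contDiff_lap hg
  have hLgu := contDiff_lap hgu
  have hLggu := contDiff_lap hggu
  have hP := contDiff_inner_gradient hg hu
  have hG := contDiff_inner_gradient hg hg
  have hint : ∀ F : EuclideanSpace ℝ (Fin n) → ℝ, Continuous F →
      Integrable fun x => F x * u x := fun F hF =>
    (hF.mul hu.continuous).integrable_of_hasCompactSupport husupp.mul_left
  have hrx : ∀ x, r x * g x * u x = lap (lap fun y => g y * u y) x * (g x * u x)
      - lap (lap u) x * (g x * (g x * u x)) := by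
    intro x
    have e := lap_lap_mul hg hu x
    rw [hr]
    simp only [bilap]
    rw [← e]
    ring
  have main : ∫ x, r x * g x * u x = ∫ x, ((u x * lap g x + 2 * ⟪gradient g x, gradient u x⟫) ^ 2
      - 2 * (‖gradient g x‖ ^ 2 * u x * lap u x)) := by
    have hi1 : Integrable fun x => lap (lap fun y => g y * u y) x * (g x * u x) := by
      refine (hint (fun x => lap (lap fun y => g y * u y) x * g x)
        ((contDiff_lap hLgu).continuous.mul hg.continuous)).congr (.of_forall fun x => ?_)
      simp only
      ring
    have hi2 : Integrable fun x => lap (lap u) x * (g x * (g x * u x)) := by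
      refine (hint (fun x => lap (lap u) x * (g x * g x))
        ((contDiff_lap hLu).continuous.mul (hg.continuous.mul hg.continuous))).congr
        (.of_forall fun x => ?_)
      simp only
      ring
    have hi3 : Integrable fun x => lap (fun y => g y * u y) x * lap (fun y => g y * u y) x :=
      (hLgu.continuous.mul hLgu.continuous).integrable_of_hasCompactSupport
        (hasCompactSupport_lap hcgu).mul_left
    have hi4 : Integrable fun x => lap u x * lap (fun y => g y * (g y * u y)) x :=
      (hLu.continuous.mul hLggu.continuous).integrable_of_hasCompactSupport
        (hasCompactSupport_lap hcggu).mul_left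
    simp only [hrx]
    rw [integral_sub hi1 hi2, integral_lap_mul_comm hgu hLgu hcgu,
      integral_lap_mul_comm hggu hLu hcggu, ← integral_sub hi3 hi4]
    refine integral_congr_ae (.of_forall fun x => ?_)
    simp only
    rw [lap_mul hg hgu, inner_gradient_mul_right hg hu, lap_mul hg hu,
      real_inner_self_eq_norm_sq]
    ring
  refine ⟨?_, ?_⟩
  · rw [main]
    refine integral_congr_ae (.of_forall fun x => ?_)
    simp only
    ring
  · rw [main, integral_sub, integral_const_mul]
    -- the square is integrable because `uΔg + 2∇g·∇u = Δ(gu) - gΔu` is compactly supported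
    · have e : (fun x => u x * lap g x + 2 * ⟪gradient g x, gradient u x⟫) =
          fun x => lap (fun y => g y * u y) x - g x * lap u x := by
        funext x
        rw [lap_mul hg hu]
        ring
      have hc : HasCompactSupport fun x => lap (fun y => g y * u y) x - g x * lap u x :=
        (hasCompactSupport_lap hcgu).sub (hasCompactSupport_lap husupp).mul_left
      rw [← e] at hc
      have hcont : Continuous fun x => u x * lap g x + 2 * ⟪gradient g x, gradient u x⟫ :=
        (hu.continuous.mul hLg.continuous).add (continuous_const.mul hP.continuous)
      refine ((hcont.mul hcont).integrable_of_hasCompactSupport hc.mul_left).congr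
        (.of_forall fun x => ?_)
      simp only [Pi.mul_apply]
      ring
    · refine (hint (fun x => 2 * (⟪gradient g x, gradient g x⟫ * lap u x))
        (continuous_const.mul (hG.continuous.mul hLu.continuous))).congr (.of_forall fun x => ?_)
      simp only [real_inner_self_eq_norm_sq]
      ring
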